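/- Single-hop greedy bound from the proof of Theorem 3.5: Let n : ℕ be even, let c > 0 be a real, and define m : Fin n → ℝ by m v = c/2 if (v : ℕ) is even and m v = 3c/2 if (v : ℕ) is odd (one row of the chessboard demand matrix, whose total is ∑_v m v = c·n). Then for every ĉ : Fin n → ℕ with ∑_v ĉ v ≤ n (at most n outgoing links allocated from the node), the total demand of the row that can be satisfied on single-hop paths satisfies ∑_v min (c · ĉ v) (m v) ≤ (3/4) · c · n. (That is, by greedily adding links between source-destination pairs, at most 3/4 of the total demand from each row of the chessboard matrix can be satisfied in a single hop, so at least 1/4 of it requires paths of at least 2 hops.) -/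

import Mathlib

/-!
Every demand of the row is a half-integral multiple `(j + 1/2) * c` of the link capacity, with
`j = 0` or `j = 1`. Integrality of the number `k` of links makes the served demand at most
`(k + j) * c / 2`: charge every link `c / 2`, and a demand then retains a surplus of at most
`j * c / 2`. Summing over the row, the links cost at most `n * c / 2`, and the surpluses add up
to `⌊n / 2⌋ * c / 2`.
-/

section HalfIntegralDemand

variable {K : Type*} [Field K] [LinearOrder K] [IsStrictOrderedRing K]

lemma min_intCast_add_half_le (k j : ℤ) : min (k : K) (j + 1 / 2) ≤ (k + j) / 2 := by
  rcases le_or_gt k j with hkj | hjk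
  · have hkj' : (k : K) ≤ j := by exact_mod_cast hkj
    exact (min_le_left _ _).trans (by linarith)
  · have hjk' : (j : K) + 1 ≤ k := by exact_mod_cast hjk
    exact (min_le_right _ _).trans (by linarith)

lemma sum_min_mul_intCast_add_half_le {ι : Type*} (s : Finset ι) {c : K} (hc : 0 ≤ c)
    (k j : ι → ℤ) :
    ∑ i ∈ s, min (c * k i) (c * (j i + 1 / 2)) ≤
      c / 2 * (∑ i ∈ s, (k i : K) + ∑ i ∈ s, (j i : K)) := by
  calc ∑ i ∈ s, min (c * k i) (c * (j i + 1 / 2))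
      = ∑ i ∈ s, c * min (k i : K) (j i + 1 / 2) := by simp only [mul_min_of_nonneg _ _ hc]
    _ ≤ ∑ i ∈ s, c * (((k i : K) + j i) / 2) := by
        gcongr with i
        exact min_intCast_add_half_le (k i) (j i)
    _ = c / 2 * (∑ i ∈ s, (k i : K) + ∑ i ∈ s, (j i : K)) := by
        rw [← Finset.mul_sum, ← Finset.sum_div, Finset.sum_add_distrib]
        ring

end HalfIntegralDemand

lemma ite_even_half_eq_mul_mod_two_add_half {K : Type*} [Field K] [NeZero (2 : K)]
    (c : K) (i : ℕ) :
    (if Even i then c / 2 else 3 * c / 2) = c * (((i % 2 : ℕ) : K) + 1 / 2) := by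
  split_ifs with hi
  · rw [Nat.even_iff.mp hi, Nat.cast_zero]
    ring
  · rw [Nat.not_even_iff.mp hi, Nat.cast_one]
    field_simp
    ring

lemma sum_range_mod_two (n : ℕ) : ∑ i ∈ Finset.range n, i % 2 = n / 2 := by
  induction n with
  | zero => rfl
  | succ n ih =>
    rw [Finset.sum_range_succ, ih]
    omega

theorem chessboard_single_hop_bound_general (n : ℕ) (c : ℝ) (hc : 0 ≤ c) (m : Fin n → ℝ)
    (hm : ∀ v : Fin n, m v = if Even (v : ℕ) then c / 2 else 3 * c / 2)
    (chat : Fin n → ℕ) (h : ∑ v, chat v ≤ n) :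
    ∑ v, min (c * (chat v : ℝ)) (m v) ≤ (3 / 4) * c * n := by
  have hlinks : ∑ v, (chat v : ℝ) ≤ n := by exact_mod_cast h
  have hsurplus : ∑ v : Fin n, ((v % 2 : ℕ) : ℝ) ≤ n / 2 := by
    rw [← Nat.cast_sum, Fin.sum_univ_eq_sum_range (· % 2), sum_range_mod_two]
    exact Nat.cast_div_le
  calc ∑ v, min (c * (chat v : ℝ)) (m v)
      = ∑ v, min (c * (chat v : ℝ)) (c * (((v % 2 : ℕ) : ℝ) + 1 / 2)) := by
        simp only [hm, ite_even_half_eq_mul_mod_two_add_half]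
    _ ≤ c / 2 * (∑ v, (chat v : ℝ) + ∑ v : Fin n, ((v % 2 : ℕ) : ℝ)) := by
        exact_mod_cast sum_min_mul_intCast_add_half_le Finset.univ hc
          (fun v => (chat v : ℤ)) (fun v => ((v % 2 : ℕ) : ℤ))
    _ ≤ c / 2 * (n + n / 2) := by gcongr
    _ = (3 / 4) * c * n := by ring

/-- Single-hop greedy bound from the proof of Theorem 3.5: for one row of the
chessboard demand matrix (alternating `c/2` and `3c/2`, totalling `c·n`), any
allocation of at most `n` outgoing direct links can deliver at most `3/4` of
the row's total demand `c·n` on single-hop paths. -/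
theorem chessboard_single_hop_bound (n : ℕ) (hne : Even n)
    (c : ℝ) (hc : 0 < c) (m : Fin n → ℝ)
    (hm : ∀ v : Fin n, m v = if Even (v : ℕ) then c / 2 else 3 * c / 2)
    (chat : Fin n → ℕ) (h : ∑ v, chat v ≤ n) :
    ∑ v, min (c * (chat v : ℝ)) (m v) ≤ (3 / 4) * c * n :=
  chessboard_single_hop_bound_general n c hc.le m hm chat h
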